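/- Fix p1, p2 ∈ [0,1] and let μ be the probability measure on Bool × Bool × Bool with μ({(x,u,y)}) = (1/2)·k(p1, x, u)·k(p2, u, y), with coordinate projections X, U, Y. Then the mutual information between the action pair and the auxiliary variable satisfies I[⟨X,Y⟩ : U] = log 2 + h(p) − h(p1) − h(p2), where p = p1 + p2 − 2·p1·p2. (This is the evaluation I(XY;U) = 1 + h₂(p) − h₂(p1) − h₂(p2) bits, stated in nats, used for the separation-based scheme in the binary example.) -/

import Mathlib

open MeasureTheory

/-- Binary symmetric channel kernel: `k(q,a,b) = 1-q` if `a = b`, else `q`. -/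
noncomputable def bsc (q : ℝ) (a b : Bool) : ℝ := if a = b then 1 - q else q

/-- Shannon entropy (natural logarithm) of a finite-valued random variable. -/
noncomputable def entropyRV {Ω : Type*} [MeasurableSpace Ω] (μ : Measure Ω)
    {S : Type*} [Fintype S] (X : Ω → S) : ℝ :=
  ∑ s : S, Real.negMulLog ((μ (X ⁻¹' {s})).toReal)

/-- Mutual information `I[X : Y] = H[X] + H[Y] - H[⟨X,Y⟩]`. -/
noncomputable def mutualInfoRV {Ω : Type*} [MeasurableSpace Ω] (μ : Measure Ω)
    {S T : Type*} [Fintype S] [Fintype T] (X : Ω → S) (Y : Ω → T) : ℝ :=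
  entropyRV μ X + entropyRV μ Y - entropyRV μ (fun ω => (X ω, Y ω))

/-! By the Markov property, `H[X, U, Y] = H[X] + h(p1) + h(p2)`. Marginalizing over `U` makes the
channel from `X` to `Y` a binary symmetric channel with crossover probability
`p = p1 + p2 - 2 * p1 * p2`, so `H[X, Y] = H[X] + h(p)`. In `I[⟨X, Y⟩ : U]` the term `H[X]` cancels,
leaving `H[U] + h(p) - h(p1) - h(p2)` for every input distribution; a uniform input makes `U`
uniform. -/

section FiniteRange

/-- The swap of the last two factors of a left-nested triple product, used to move the auxiliary
variable past the output. -/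
def prodRightComm (α β γ : Type*) : (α × β) × γ ≃ (α × γ) × β where
  toFun p := ((p.1.1, p.2), p.1.2)
  invFun p := ((p.1.1, p.2), p.1.2)

theorem preimage_equiv_comp_singleton {Ω S T : Type*} (e : S ≃ T) (A : Ω → S) (a : S) :
    (fun ω => e (A ω)) ⁻¹' {e a} = A ⁻¹' {a} := by
  ext ω
  simp only [Set.mem_preimage, Set.mem_singleton_iff, EmbeddingLike.apply_eq_iff_eq]

variable {Ω S T : Type*} [MeasurableSpace Ω] {μ : Measure Ω}

theorem entropyRV_equiv_comp [Fintype S] [Fintype T] (e : S ≃ T) (A : Ω → S) :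
    entropyRV μ (fun ω => e (A ω)) = entropyRV μ A := by
  simp only [entropyRV, ← e.sum_comp, preimage_equiv_comp_singleton]

theorem entropyRV_of_uniform [Fintype S] {A : Ω → S}
    (hA : ∀ a, μ.real (A ⁻¹' {a}) = (Fintype.card S : ℝ)⁻¹) :
    entropyRV μ A = Real.log (Fintype.card S) := by
  change ∑ a, Real.negMulLog (μ.real (A ⁻¹' {a})) = _
  rcases isEmpty_or_nonempty S with _ | _ <;> simp [hA, Real.negMulLog, Real.log_inv]

theorem sum_measureReal_preimage_singleton_eq_one [IsProbabilityMeasure μ] [Fintype S]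
    [MeasurableSpace S] [MeasurableSingletonClass S] {A : Ω → S} (hA : Measurable A) :
    ∑ a, μ.real (A ⁻¹' {a}) = 1 := by
  rw [sum_measureReal_preimage_singleton _ fun a _ => hA (measurableSet_singleton a),
    Finset.coe_univ, Set.preimage_univ, probReal_univ]

variable [Fintype T] [MeasurableSpace T] [MeasurableSingletonClass T] [IsFiniteMeasure μ]
  {A : Ω → S} {B : Ω → T}

theorem measureReal_preimage_singleton_eq_sum_prodMk (A : Ω → S) (hB : Measurable B) (a : S) :
    μ.real (A ⁻¹' {a}) = ∑ b, μ.real ((fun ω => (A ω, B ω)) ⁻¹' {(a, b)}) := by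
  have hB' (b : T) : MeasurableSet (B ⁻¹' {b}) := hB (measurableSet_singleton b)
  have hfibers := sum_measureReal_preimage_singleton (μ := μ.restrict (A ⁻¹' {a})) Finset.univ
    fun b _ => hB' b
  rw [Finset.coe_univ, Set.preimage_univ, measureReal_restrict_apply_univ] at hfibers
  rw [← hfibers]
  refine Finset.sum_congr rfl fun b _ => ?_
  rw [measureReal_restrict_apply (hB' b), ← Set.singleton_prod_singleton, Set.mk_preimage_prod,
    Set.inter_comm]

theorem measureReal_preimage_singleton_of_channel (hB : Measurable B) {w : S → ℝ}
    {κ : S → T → ℝ} (hκ : ∀ a, ∑ b, κ a b = 1)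
    (hAB : ∀ a b, μ.real ((fun ω => (A ω, B ω)) ⁻¹' {(a, b)}) = w a * κ a b) (a : S) :
    μ.real (A ⁻¹' {a}) = w a := by
  simp only [measureReal_preimage_singleton_eq_sum_prodMk A hB, hAB, ← Finset.mul_sum, hκ,
    mul_one]

theorem entropyRV_prodMk_of_channel [Fintype S] (hB : Measurable B) {w : S → ℝ}
    {κ : S → T → ℝ} (hκ : ∀ a, ∑ b, κ a b = 1)
    (hAB : ∀ a b, μ.real ((fun ω => (A ω, B ω)) ⁻¹' {(a, b)}) = w a * κ a b) :
    entropyRV μ (fun ω => (A ω, B ω)) =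
      entropyRV μ A + ∑ a, w a * ∑ b, Real.negMulLog (κ a b) := by
  have hA := measureReal_preimage_singleton_of_channel hB hκ hAB
  simp only [measureReal_def] at hA hAB
  simp only [entropyRV, Fintype.sum_prod_type, hA, hAB, Real.negMulLog_mul,
    Finset.sum_add_distrib, ← Finset.sum_mul, ← Finset.mul_sum, hκ, one_mul]

end FiniteRange

section BinarySymmetricChannel

theorem bsc_comm (q : ℝ) (a b : Bool) : bsc q a b = bsc q b a := by
  simp only [bsc, eq_comm]

theorem sum_bsc (q : ℝ) (a : Bool) : ∑ b, bsc q a b = 1 := by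
  cases a <;> simp [bsc]

theorem sum_negMulLog_bsc (q : ℝ) (a : Bool) :
    ∑ b, Real.negMulLog (bsc q a b) = Real.binEntropy q := by
  cases a <;> simp [bsc, Real.binEntropy_eq_negMulLog_add_negMulLog_one_sub, add_comm]

theorem sum_bsc_mul_bsc (p q : ℝ) (a c : Bool) :
    ∑ b, bsc p a b * bsc q b c = bsc (p + q - 2 * p * q) a c := by
  cases a <;> cases c <;> simp [bsc] <;> ring

variable {Ω : Type*} [MeasurableSpace Ω] {μ : Measure Ω} [IsProbabilityMeasure μ]

theorem entropyRV_prodMk_of_bsc {S : Type*} [Fintype S] [MeasurableSpace S]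
    [MeasurableSingletonClass S] {A : Ω → S} {B : Ω → Bool} (hA : Measurable A)
    (hB : Measurable B) {w : S → ℝ} {q : ℝ} {f : S → Bool}
    (hAB : ∀ a b, μ.real ((fun ω => (A ω, B ω)) ⁻¹' {(a, b)}) = w a * bsc q (f a) b) :
    entropyRV μ (fun ω => (A ω, B ω)) = entropyRV μ A + Real.binEntropy q := by
  have hw : ∑ a, w a = 1 := by
    simpa only [measureReal_preimage_singleton_of_channel hB (fun a => sum_bsc q (f a)) hAB]
      using sum_measureReal_preimage_singleton_eq_one (μ := μ) hA
  simp only [entropyRV_prodMk_of_channel hB (fun a => sum_bsc q (f a)) hAB, sum_negMulLog_bsc,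
    ← Finset.sum_mul, hw, one_mul]

end BinarySymmetricChannel

/-- The joint law of a cascade `X → U → Y` of two binary symmetric channels with crossover
probabilities `p1` and `p2` and input distribution `w`. The product form needs no conditioning on
events that may be null. -/
def IsBSCCascade {Ω : Type*} [MeasurableSpace Ω] (μ : Measure Ω) (w : Bool → ℝ) (p1 p2 : ℝ)
    (X U Y : Ω → Bool) : Prop :=
  ∀ x u y, μ.real ((fun ω => (X ω, U ω, Y ω)) ⁻¹' {(x, u, y)}) =
    w x * bsc p1 x u * bsc p2 u y

namespace IsBSCCascade

variable {Ω : Type*} [MeasurableSpace Ω] {μ : Measure Ω} {w : Bool → ℝ}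
  {p1 p2 : ℝ} {X U Y : Ω → Bool}

theorem measureReal_input_aux_output (h : IsBSCCascade μ w p1 p2 X U Y) (a : Bool × Bool)
    (y : Bool) :
    μ.real ((fun ω => ((X ω, U ω), Y ω)) ⁻¹' {(a, y)}) =
      w a.1 * bsc p1 a.1 a.2 * bsc p2 a.2 y := by
  rw [← h]
  exact congrArg μ.real (preimage_equiv_comp_singleton (Equiv.prodAssoc Bool Bool Bool)
    (fun ω => ((X ω, U ω), Y ω)) (a, y)).symm

theorem measureReal_input_aux [IsFiniteMeasure μ] (h : IsBSCCascade μ w p1 p2 X U Y)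
    (hY : Measurable Y) (x u : Bool) :
    μ.real ((fun ω => (X ω, U ω)) ⁻¹' {(x, u)}) = w x * bsc p1 x u :=
  measureReal_preimage_singleton_of_channel (κ := fun a => bsc p2 a.2)
    (w := fun a => w a.1 * bsc p1 a.1 a.2) hY (fun a => sum_bsc p2 a.2)
    h.measureReal_input_aux_output (x, u)

theorem measureReal_input_output [IsFiniteMeasure μ] (h : IsBSCCascade μ w p1 p2 X U Y)
    (hU : Measurable U) (x y : Bool) :
    μ.real ((fun ω => (X ω, Y ω)) ⁻¹' {(x, y)}) =
      w x * bsc (p1 + p2 - 2 * p1 * p2) x y := by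
  have hXYU (u : Bool) : μ.real ((fun ω => ((X ω, Y ω), U ω)) ⁻¹' {((x, y), u)}) =
      w x * (bsc p1 x u * bsc p2 u y) := by
    rw [← mul_assoc, ← h.measureReal_input_aux_output (x, u)]
    exact congrArg μ.real (preimage_equiv_comp_singleton (prodRightComm Bool Bool Bool)
      (fun ω => ((X ω, U ω), Y ω)) ((x, u), y))
  rw [measureReal_preimage_singleton_eq_sum_prodMk _ hU]
  simp only [hXYU, ← Finset.mul_sum, sum_bsc_mul_bsc]

theorem measureReal_aux_of_uniform [IsFiniteMeasure μ]
    (h : IsBSCCascade μ (fun _ => 1 / 2) p1 p2 X U Y) (hX : Measurable X) (hY : Measurable Y)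
    (u : Bool) : μ.real (U ⁻¹' {u}) = 1 / 2 := by
  -- The reversed channel, from `U` back to `X`, is the same binary symmetric channel.
  have hUX (u x : Bool) :
      μ.real ((fun ω => (U ω, X ω)) ⁻¹' {(u, x)}) = 1 / 2 * bsc p1 u x := by
    rw [bsc_comm, ← h.measureReal_input_aux hY]
    exact congrArg μ.real (preimage_equiv_comp_singleton (Equiv.prodComm Bool Bool)
      (fun ω => (X ω, U ω)) (x, u))
  exact measureReal_preimage_singleton_of_channel (w := fun _ => 1 / 2) hX (sum_bsc p1) hUX u

theorem entropyRV_aux_of_uniform [IsFiniteMeasure μ]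
    (h : IsBSCCascade μ (fun _ => 1 / 2) p1 p2 X U Y) (hX : Measurable X) (hY : Measurable Y) :
    entropyRV μ U = Real.log 2 := by
  have hU (u : Bool) : μ.real (U ⁻¹' {u}) = (Fintype.card Bool : ℝ)⁻¹ := by
    rw [h.measureReal_aux_of_uniform hX hY, Fintype.card_bool, Nat.cast_two, one_div]
  rw [entropyRV_of_uniform hU, Fintype.card_bool, Nat.cast_two]

variable [IsProbabilityMeasure μ]

theorem entropyRV_input_output (h : IsBSCCascade μ w p1 p2 X U Y) (hX : Measurable X)
    (hU : Measurable U) (hY : Measurable Y) :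
    entropyRV μ (fun ω => (X ω, Y ω)) =
      entropyRV μ X + Real.binEntropy (p1 + p2 - 2 * p1 * p2) :=
  entropyRV_prodMk_of_bsc (f := id) hX hY (h.measureReal_input_output hU)

theorem entropyRV_input_output_aux (h : IsBSCCascade μ w p1 p2 X U Y) (hX : Measurable X)
    (hU : Measurable U) (hY : Measurable Y) :
    entropyRV μ (fun ω => ((X ω, Y ω), U ω)) =
      entropyRV μ X + Real.binEntropy p1 + Real.binEntropy p2 := by
  calc entropyRV μ (fun ω => ((X ω, Y ω), U ω))
    _ = entropyRV μ (fun ω => ((X ω, U ω), Y ω)) :=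
      entropyRV_equiv_comp (prodRightComm Bool Bool Bool) (fun ω => ((X ω, U ω), Y ω))
    _ = entropyRV μ (fun ω => (X ω, U ω)) + Real.binEntropy p2 :=
      entropyRV_prodMk_of_bsc (f := Prod.snd) (w := fun a => w a.1 * bsc p1 a.1 a.2)
        (hX.prodMk hU) hY h.measureReal_input_aux_output
    _ = entropyRV μ X + Real.binEntropy p1 + Real.binEntropy p2 := by
      rw [entropyRV_prodMk_of_bsc (f := id) hX hU (h.measureReal_input_aux hY)]

end IsBSCCascade

theorem mutualInfo_actions_aux_general {Ω : Type*} [MeasurableSpace Ω] {μ : Measure Ω}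
    [IsProbabilityMeasure μ] {w : Bool → ℝ} {p1 p2 : ℝ} {X U Y : Ω → Bool}
    (h : IsBSCCascade μ w p1 p2 X U Y) (hX : Measurable X) (hU : Measurable U)
    (hY : Measurable Y) :
    mutualInfoRV μ (fun ω => (X ω, Y ω)) U
      = entropyRV μ U + Real.binEntropy (p1 + p2 - 2 * p1 * p2)
        - Real.binEntropy p1 - Real.binEntropy p2 := by
  rw [mutualInfoRV, h.entropyRV_input_output hX hU hY, h.entropyRV_input_output_aux hX hU hY]
  ring

/-- For a uniform binary `X` passed through a `BSC(p1)` to produce `U` and then a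
`BSC(p2)` to produce `Y`, the mutual information between the action pair and the
auxiliary variable is `I(XY;U) = log 2 + h(p) - h(p1) - h(p2)` (in nats), where
`p = p1 + p2 - 2·p1·p2`. -/
theorem mutualInfo_actions_aux (p1 p2 : ℝ)
    (hp1 : p1 ∈ Set.Icc (0 : ℝ) 1) (hp2 : p2 ∈ Set.Icc (0 : ℝ) 1)
    (μ : Measure (Bool × Bool × Bool)) [IsProbabilityMeasure μ]
    (hμ : ∀ x u y : Bool, (μ {(x, u, y)}).toReal = (1 / 2) * bsc p1 x u * bsc p2 u y) :
    mutualInfoRV μ (fun ω => (ω.1, ω.2.2)) (fun ω => ω.2.1)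
      = Real.log 2 + Real.binEntropy (p1 + p2 - 2 * p1 * p2)
        - Real.binEntropy p1 - Real.binEntropy p2 := by
  have h : IsBSCCascade μ (fun _ => 1 / 2) p1 p2 (fun ω => ω.1) (fun ω => ω.2.1)
      (fun ω => ω.2.2) := hμ
  rw [mutualInfo_actions_aux_general h (by fun_prop) (by fun_prop) (by fun_prop),
    h.entropyRV_aux_of_uniform (by fun_prop) (by fun_prop)]
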